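/- Let R be a right semiartinian ring with right socle sequence (S_α | α ≤ σ+1). Then the following are equivalent: (1) R is von Neumann regular with primitive factors artinian; (2) for each α ≤ σ there are a cardinal λ_α, positive integers n_{αβ} (β < λ_α), and skew-fields K_{αβ} (β < λ_α) such that the α-th layer L_α = S_{α+1}/S_α is isomorphic, as a ring without unit, to the direct sum ⊕_{β<λ_α} M_{n_{αβ}}(K_{αβ}) of full matrix rings, λ_α is infinite iff α < σ, and for each β < λ_α the preimage of M_{n_{αβ}}(K_{αβ}) under this isomorphism equals the β-th homogeneous component of Soc(R/S_α) and is finitely generated as a right R/S_α-module. -/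

import Mathlib

universe u

open Submodule Function

/-- The socle of a module: the supremum of all simple submodules. -/
def moduleSocle (R : Type*) (M : Type*) [Ring R] [AddCommGroup M] [Module R M] :
    Submodule R M :=
  sSup {W : Submodule R M | IsSimpleModule R ↥W}

/-- A ring is right semiartinian if every nonzero quotient of the right module `R_R`
has a nonzero socle. -/
def IsRightSemiartinian (R : Type u) [Ring R] : Prop :=
  ∀ I : Submodule Rᵐᵒᵖ R, I ≠ ⊤ → moduleSocle Rᵐᵒᵖ (R ⧸ I) ≠ ⊥

/-- The right socle sequence of a ring: `S_0 = 0`, `S_{α+1}/S_α = Soc(R/S_α)`,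
and unions at limits. -/
noncomputable def socleSeq (R : Type u) [Ring R] : Ordinal.{u} → Submodule Rᵐᵒᵖ R :=
  fun o => Ordinal.limitRecOn o ⊥
    (fun _ S => Submodule.comap S.mkQ (moduleSocle Rᵐᵒᵖ (R ⧸ S)))
    (fun o _ ih => ⨆ (β : Ordinal.{u}) (h : β < o), ih β h)

/-- `S_α`, viewed as a submodule of `S_{α+1}`; the kernel of the `α`-th layer
epimorphism `π_α : S_{α+1} → S_{α+1}/S_α`. -/
noncomputable def layerKer (R : Type u) [Ring R] (α : Ordinal.{u}) :
    Submodule Rᵐᵒᵖ ↥(socleSeq R (α + 1)) :=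
  (socleSeq R α).comap (socleSeq R (α + 1)).subtype

/-- The `α`-th layer `L_α = S_{α+1}/S_α` of a ring. -/
noncomputable abbrev Layer (R : Type u) [Ring R] (α : Ordinal.{u}) :=
  ↥(socleSeq R (α + 1)) ⧸ layerKer R α

/-- A module `M` is weakly `R`-projective if for each `0 < α ≤ σ`, every homomorphism
`f : M → L_α` with finitely generated image factors through the `α`-th layer
epimorphism `π_α : S_{α+1} → L_α`. -/
def WeaklyRProjective (R : Type u) [Ring R] (σ : Ordinal.{u})
    (M : Type u) [AddCommGroup M] [Module Rᵐᵒᵖ M] : Prop :=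
  ∀ α : Ordinal.{u}, 0 < α → α ≤ σ →
    ∀ f : M →ₗ[Rᵐᵒᵖ] Layer R α, (LinearMap.range f).FG →
      ∃ g : M →ₗ[Rᵐᵒᵖ] ↥(socleSeq R (α + 1)), (layerKer R α).mkQ ∘ₗ g = f

/-- A ring is von Neumann regular if each `r` admits `s` with `r * s * r = r`. -/
def IsVNRegular (R : Type u) [Ring R] : Prop :=
  ∀ r : R, ∃ s : R, r * s * r = r

/-- The annihilator of a right `R`-module, as a submodule of the right module `R_R`. -/
def rightAnnihilator (R : Type u) [Ring R] (M : Type u) [AddCommGroup M]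
    [Module Rᵐᵒᵖ M] : Submodule Rᵐᵒᵖ R where
  carrier := {r : R | ∀ m : M, MulOpposite.op r • m = 0}
  add_mem' := by
    intro a b ha hb m
    rw [MulOpposite.op_add, add_smul, ha m, hb m, add_zero]
  zero_mem' := by
    intro m
    rw [MulOpposite.op_zero, zero_smul]
  smul_mem' := by
    intro c r hr m
    have h : MulOpposite.op (c • r) = c * MulOpposite.op r := by
      rw [MulOpposite.smul_eq_mul_unop, MulOpposite.op_mul, MulOpposite.op_unop]
    rw [h, mul_smul, hr m, smul_zero]

/-- A ring has (right) primitive factors artinian if, for each right primitive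
(two-sided) ideal `P`, i.e. the annihilator of a simple right module, the factor
`R/P` is (right) artinian. -/
def HasPFA (R : Type u) [Ring R] : Prop :=
  ∀ (M : Type u) [AddCommGroup M] [Module Rᵐᵒᵖ M], IsSimpleModule Rᵐᵒᵖ M →
    IsArtinian Rᵐᵒᵖ (R ⧸ rightAnnihilator R M)

/-- A submodule `H` of a right module `M` is a homogeneous component if it is the sum of
all submodules isomorphic to some fixed simple submodule `T` of `M`. -/
def IsHomogeneousComponent (R : Type u) [Ring R] (M : Type u) [AddCommGroup M]
    [Module Rᵐᵒᵖ M] (H : Submodule Rᵐᵒᵖ M) : Prop :=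
  ∃ T : Submodule Rᵐᵒᵖ M, IsSimpleModule Rᵐᵒᵖ ↥T ∧
    H = sSup {W : Submodule Rᵐᵒᵖ M | Nonempty (↥W ≃ₗ[Rᵐᵒᵖ] ↥T)}

/-- The structure of the `α`-th layer `L_α = S_{α+1}/S_α = Soc(R/S_α)` asserted in
condition (2) of Theorem 7 of the paper: there is an additive isomorphism `φ` of the
layer with the direct sum `⊕_{β < λ_α} M_{n_{αβ}}(K_{αβ})` of full matrix rings over
skew-fields which preserves the multiplication induced from `R` (i.e. it is an
isomorphism of rings without unit), `λ_α` is infinite iff `α < σ`, and the preimages of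
the matrix summands are exactly the homogeneous components of `Soc(R/S_α)`, each of them
finitely generated as a right `R/S_α`-module. -/
def LayerDecomposition (R : Type u) [Ring R] (σ α : Ordinal.{u})
    (ι : Type u) (n : ι → ℕ) (K : ι → Type u) [∀ β, DivisionRing (K β)] : Prop :=
  ∃ φ : ↥(moduleSocle Rᵐᵒᵖ (R ⧸ socleSeq R α)) ≃+
      (Π₀ β : ι, Matrix (Fin (n β)) (Fin (n β)) (K β)),
    (∀ β, 0 < n β) ∧
    (Infinite ι ↔ α < σ) ∧
    (∀ (a b c : ↥(moduleSocle Rᵐᵒᵖ (R ⧸ socleSeq R α))) (x y : R),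
      (socleSeq R α).mkQ x = ↑a → (socleSeq R α).mkQ y = ↑b →
        (socleSeq R α).mkQ (x * y) = ↑c → ∀ β, φ c β = φ a β * φ b β) ∧
    ∃ H : ι → Submodule Rᵐᵒᵖ (R ⧸ socleSeq R α),
      (∀ β, (H β : Set (R ⧸ socleSeq R α)) =
        Subtype.val '' {s : ↥(moduleSocle Rᵐᵒᵖ (R ⧸ socleSeq R α)) |
          ∀ γ, γ ≠ β → φ s γ = 0}) ∧
      (∀ β, IsHomogeneousComponent R (R ⧸ socleSeq R α) (H β)) ∧
      (∀ β, (H β).FG) ∧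
      Function.Injective H ∧
      (∀ H' : Submodule Rᵐᵒᵖ (R ⧸ socleSeq R α),
        IsHomogeneousComponent R (R ⧸ socleSeq R α) H' → ∃ β, H' = H β)

/-!
For a two-sided ideal `S` of `R`, the `Rᵐᵒᵖ`-submodules of `Q = R ⧸ S` are the right ideals of the
ring `Q`. If `Q` is regular, a finitely generated homogeneous component `H` of its socle has a
two-sided identity element, so left multiplication identifies `H` with `End H`, a matrix ring over a
skew-field. Moreover `H` meets its annihilator trivially, so it embeds into a primitive factor of
`R` and is finitely generated when this factor is artinian. If there are only finitely many
components of the socle of `R ⧸ S_α`, that socle is a direct summand, and semiartinianity leaves no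
room for a complement: `S_{α+1} = R`.

Conversely, regularity of the layers lifts along the socle sequence, because `x` is regular as soon
as `x - x * y * x` is. A simple module `M` is isomorphic to a simple submodule of some `R ⧸ S_α`; if
`H` is its homogeneous component and `u ∈ H` is the identity of `H`, then `q - u * q` annihilates
`M` for all `q`, so `H` maps onto the primitive factor at `M`, which is therefore artinian.
-/

section Regular

theorem isVNRegular_of_isSemisimpleRing (R : Type*) [Ring R] [IsSemisimpleRing R] :
    IsVNRegular R := by
  intro a
  obtain ⟨e, he, hspan⟩ := IsSemisimpleRing.ideal_eq_span_idempotent (Ideal.span {a})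
  obtain ⟨b, hb⟩ : ∃ b, b * a = e :=
    Ideal.mem_span_singleton'.1 (hspan ▸ Ideal.mem_span_singleton_self e)
  obtain ⟨c, hc⟩ : ∃ c, c * e = a :=
    Ideal.mem_span_singleton'.1 (hspan ▸ Ideal.mem_span_singleton_self a)
  exact ⟨b, by rw [mul_assoc, hb, ← hc, mul_assoc, he.eq]⟩

theorem exists_mul_mul_eq_of_sub_mul_mul {R : Type*} [Ring R] {x y : R}
    (h : ∃ z, (x - x * y * x) * z * (x - x * y * x) = x - x * y * x) :
    ∃ s, x * s * x = x := by
  obtain ⟨z, hz⟩ := h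
  refine ⟨y + (1 - y * x) * z * (1 - x * y), ?_⟩
  calc x * (y + (1 - y * x) * z * (1 - x * y)) * x
      = x * y * x + (x - x * y * x) * z * (x - x * y * x) := by noncomm_ring
    _ = x := by rw [hz]; abel

end Regular

section Socle

variable {A M N : Type*} [Ring A] [AddCommGroup M] [Module A M] [AddCommGroup N] [Module A N]

theorem moduleSocle_le_comap (f : M →ₗ[A] N) :
    moduleSocle A M ≤ (moduleSocle A N).comap f := by
  refine sSup_le fun W hW => ?_
  have : IsSimpleModule A W := hW
  rw [← Submodule.map_le_iff_le_comap, ← Submodule.range_subtype W, ← LinearMap.range_comp]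
  rcases LinearMap.injective_or_eq_zero (f ∘ₗ W.subtype) with hinj | hzero
  · exact le_sSup (IsSimpleModule.congr (LinearEquiv.ofInjective _ hinj).symm)
  · rw [hzero, LinearMap.range_zero]
    exact bot_le

theorem moduleSocle_isFullyInvariant : (moduleSocle A M).IsFullyInvariant :=
  moduleSocle_le_comap

theorem moduleSocle_eq_iSup_isotypicComponents :
    moduleSocle A M = ⨆ c : isotypicComponents A M, c.1 := by
  refine le_antisymm (sSup_le fun W hW => ?_) (iSup_le ?_)
  · exact le_iSup_of_le (⟨_, W, hW, rfl⟩ : isotypicComponents A M) W.le_isotypicComponent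
  · rintro ⟨_, T, hT, rfl⟩
    exact sSup_le_sSup fun W ⟨e⟩ => IsSimpleModule.congr e

theorem finite_isotypicComponents_of_moduleSocle_eq_top [Module.Finite A M]
    (h : moduleSocle A M = ⊤) : Finite (isotypicComponents A M) := by
  have : IsSemisimpleModule A M := sSup_simples_eq_top_iff_isSemisimpleModule.1 h
  infer_instance

theorem moduleSocle_fg_of_finite_isotypicComponents [Finite (isotypicComponents A M)]
    (hfg : ∀ c : isotypicComponents A M, c.1.FG) : (moduleSocle A M).FG := by
  rw [moduleSocle_eq_iSup_isotypicComponents]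
  exact Submodule.fg_iSup _ hfg

theorem moduleSocle_quotient_ker_eq_bot (f : M →ₗ[A] N)
    (hf : Disjoint (moduleSocle A N) (LinearMap.range f)) :
    moduleSocle A (M ⧸ LinearMap.ker f) = ⊥ := by
  let g := (LinearMap.ker f).liftQ f le_rfl
  have hg : LinearMap.ker g = ⊥ := Submodule.ker_liftQ_eq_bot _ f le_rfl le_rfl
  have hrange : LinearMap.range g = LinearMap.range f := Submodule.range_liftQ _ f le_rfl
  refine eq_bot_iff.2 fun x hx => hg.le ?_
  exact Submodule.disjoint_def.1 hf _ (moduleSocle_le_comap g hx) (hrange ▸ ⟨x, rfl⟩)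

theorem exists_isSimpleModule_linearEquiv_of_not_le_ker [IsSimpleModule A N] (f : M →ₗ[A] N)
    (hf : ¬ moduleSocle A M ≤ LinearMap.ker f) :
    ∃ T : Submodule A M, IsSimpleModule A T ∧ Nonempty (T ≃ₗ[A] N) := by
  obtain ⟨T, hT, hTf⟩ : ∃ T : Submodule A M, IsSimpleModule A T ∧ ¬ T ≤ LinearMap.ker f := by
    by_contra! h
    exact hf (sSup_le h)
  have hne : f ∘ₗ T.subtype ≠ 0 := fun h => hTf fun t ht => LinearMap.congr_fun h ⟨t, ht⟩
  exact ⟨T, hT, ⟨LinearEquiv.ofBijective _ (LinearMap.bijective_of_ne_zero hne)⟩⟩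

open Classical in
/-- The isotypic components of `M` form an internal direct sum decomposition of its socle. -/
noncomputable def isotypicComponentsSumEquiv :
    (Π₀ c : isotypicComponents A M, c.1) ≃ₗ[A] moduleSocle A M :=
  (LinearEquiv.ofInjective _
      ((sSupIndep_iff _).1 (sSupIndep_isotypicComponents A M)).dfinsupp_lsum_injective).trans
    (LinearEquiv.ofEq _ _ ((Submodule.iSup_eq_range_dfinsupp_lsum _).symm.trans
      moduleSocle_eq_iSup_isotypicComponents.symm))

open Classical in
theorem isotypicComponentsSumEquiv_single (c : isotypicComponents A M) (x : c.1) :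
    (isotypicComponentsSumEquiv (DFinsupp.single c x) : M) = x := by
  simp only [isotypicComponentsSumEquiv, LinearEquiv.trans_apply, LinearEquiv.coe_ofEq_apply,
    LinearEquiv.ofInjective_apply]
  exact DFinsupp.lsum_single ..

theorem exists_divisionRing_ringEquiv_matrix_end {A : Type*} {M : Type u} [Ring A]
    [AddCommGroup M] [Module A M] [Module.Finite A M] [Nontrivial M] [IsSemisimpleModule A M]
    (h : IsIsotypic A M) :
    ∃ (n : ℕ) (K : Type u) (_ : DivisionRing K), 0 < n ∧
      Nonempty (Module.End A M ≃+* Matrix (Fin n) (Fin n) K) := by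
  classical
  obtain ⟨n, hn, T, hT, ⟨e⟩⟩ := h.linearEquiv_fun
  exact ⟨n, Module.End A T, inferInstance, Nat.pos_of_ne_zero hn.out,
    ⟨e.conjRingEquiv.trans (endVecRingEquivMatrixEnd ..)⟩⟩

end Socle

/-- `A` acts on the ring `Q` exactly by the right multiplications of `Q`, so that the
`A`-submodules of `Q` are its right ideals. This is the situation of a factor ring `Q` of `R` under
the action of `A = Rᵐᵒᵖ`, with respect to which socles and homogeneous components are taken. -/
class ActsByRightMul (A Q : Type*) [Ring A] [Ring Q] [Module A Q] : Prop
    extends SMulCommClass A Q Q where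
  exists_smul_one_eq (q : Q) : ∃ a : A, a • (1 : Q) = q

namespace ActsByRightMul

section RightIdeals

variable {A Q : Type*} [Ring A] [Ring Q] [Module A Q] [ActsByRightMul A Q]

variable (A) in
theorem exists_forall_smul_eq_mul (q : Q) : ∃ a : A, ∀ x : Q, a • x = x * q := by
  obtain ⟨a, rfl⟩ := exists_smul_one_eq (A := A) q
  exact ⟨a, fun x => by rw [mul_smul_comm, mul_one]⟩

theorem mul_mem {N : Submodule A Q} {x : Q} (hx : x ∈ N) (q : Q) : x * q ∈ N := by
  obtain ⟨a, ha⟩ := exists_forall_smul_eq_mul A q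
  exact ha x ▸ N.smul_mem a hx

instance : Module.Finite A Q :=
  .of_surjective (LinearMap.toSpanSingleton A Q 1) exists_smul_one_eq

/-- Left multiplication by elements of `Q` on a two-sided ideal `N`. -/
def leftMulEnd {N : Submodule A Q} (hN : N.IsFullyInvariant) : Q →+* Module.End A N where
  toFun q := (LinearMap.mulLeft A q).restrict (hN (LinearMap.mulLeft A q))
  map_one' := LinearMap.ext fun x => Subtype.ext (one_mul x.1)
  map_mul' p q := LinearMap.ext fun x => Subtype.ext (mul_assoc p q x.1)
  map_zero' := LinearMap.ext fun x => Subtype.ext (zero_mul x.1)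
  map_add' p q := LinearMap.ext fun x => Subtype.ext (add_mul p q x.1)

/-- The elements of `Q` annihilating the right ideal `T` from the right. -/
def annihilator (T : Submodule A Q) : Submodule A Q where
  carrier := {q | ∀ t ∈ T, t * q = 0}
  add_mem' hp hq t ht := by rw [mul_add, hp t ht, hq t ht, add_zero]
  zero_mem' t _ := mul_zero t
  smul_mem' a q hq t ht := by rw [mul_smul_comm, hq t ht, smul_zero]

theorem mem_annihilator {T : Submodule A Q} {q : Q} :
    q ∈ annihilator T ↔ ∀ t ∈ T, t * q = 0 := Iff.rfl

theorem mul_eq_zero_of_mem_isotypicComponent {T : Submodule A Q} {q x : Q}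
    (hq : q ∈ annihilator T) (hx : x ∈ isotypicComponent A Q T) : x * q = 0 := by
  obtain ⟨a, ha⟩ := exists_forall_smul_eq_mul A q
  rw [isotypicComponent, sSup_eq_iSup'] at hx
  induction hx using Submodule.iSup_induction' with
  | mem W x hx =>
    obtain ⟨W, ⟨e⟩⟩ := W
    have hzero : a • (⟨x, hx⟩ : W) = 0 := e.injective <| by
      rw [map_smul, map_zero]
      exact Subtype.ext ((ha _).trans (hq _ (e _).2))
    exact (ha x).symm.trans (congrArg Subtype.val hzero)
  | zero => exact zero_mul q
  | add x y _ _ hx hy => rw [add_mul, hx, hy, add_zero]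

theorem mul_eq_zero_of_ne {c d : isotypicComponents A Q} (hne : c ≠ d) {x y : Q}
    (hx : x ∈ c.1) (hy : y ∈ d.1) : x * y = 0 := by
  have hdisj : Disjoint c.1 d.1 := (sSupIndep_isotypicComponents A Q).pairwiseDisjoint
    c.2 d.2 (Subtype.coe_ne_coe.2 hne)
  exact Submodule.disjoint_def.1 hdisj _ (mul_mem hx y)
    (Submodule.IsFullyInvariant.of_mem_isotypicComponents d.2 (LinearMap.mulLeft A x) hy)

/-- The representation of `Q` by left multiplications on one of its isotypic components. -/
def componentRep (c : isotypicComponents A Q) : Q →+* Module.End A c.1 :=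
  leftMulEnd (.of_mem_isotypicComponents c.2)

theorem componentRep_eq_zero {c d : isotypicComponents A Q} (hne : c ≠ d) {x : Q}
    (hx : x ∈ c.1) : componentRep d x = 0 :=
  LinearMap.ext fun y => Subtype.ext (mul_eq_zero_of_ne hne hx y.2)

theorem componentRep_isotypicComponentsSumEquiv (v : Π₀ c : isotypicComponents A Q, c.1)
    (c : isotypicComponents A Q) :
    componentRep c (isotypicComponentsSumEquiv v : Q) = componentRep c (v c : Q) := by
  classical
  induction v using DFinsupp.induction with
  | h0 => simp only [map_zero, ZeroMemClass.coe_zero, DFinsupp.zero_apply]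
  | ha d x v _ _ ih =>
    simp only [map_add, Submodule.coe_add, DFinsupp.add_apply, ih,
      isotypicComponentsSumEquiv_single]
    congr 1
    obtain rfl | hne := eq_or_ne d c
    · rw [DFinsupp.single_eq_same]
    · rw [componentRep_eq_zero hne x.2, DFinsupp.single_eq_of_ne hne.symm, ZeroMemClass.coe_zero,
        map_zero]

theorem ker_mulLeft_one_sub {N : Submodule A Q} {e : Q} (he : e ∈ N) (hid : ∀ x ∈ N, e * x = x) :
    LinearMap.ker (LinearMap.mulLeft A (1 - e)) = N := by
  ext x
  rw [LinearMap.mem_ker, LinearMap.mulLeft_apply, sub_mul, one_mul, sub_eq_zero]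
  exact ⟨fun hx => hx ▸ mul_mem he x, fun hx => (hid x hx).symm⟩

theorem disjoint_range_mulLeft_one_sub {N : Submodule A Q} {e : Q} (he : e ∈ N)
    (hid : ∀ x ∈ N, e * x = x) :
    Disjoint N (LinearMap.range (LinearMap.mulLeft A (1 - e))) := by
  refine Submodule.disjoint_def.2 ?_
  rintro _ hx ⟨y, rfl⟩
  rw [← hid _ hx, LinearMap.mulLeft_apply, ← mul_assoc, mul_sub, mul_one, hid e he, sub_self,
    zero_mul]

theorem isArtinian_quotient_annihilator {T : Submodule A Q} [IsSimpleModule A T]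
    (hfg : (isotypicComponent A Q T).FG) {u : Q} (hu : u ∈ isotypicComponent A Q T)
    (hid : ∀ t ∈ T, t * u = t) : IsArtinian A (Q ⧸ annihilator T) := by
  have : Module.Finite A (isotypicComponent A Q T) := Module.Finite.iff_fg.2 hfg
  have hart : IsArtinian A (isotypicComponent A Q T) :=
    (IsSemisimpleModule.finite_tfae.out 0 2).1 this
  refine isArtinian_of_surjective _
    ((annihilator T).mkQ.domRestrict (isotypicComponent A Q T)) ?_
  rintro ⟨q⟩
  refine ⟨⟨u * q, mul_mem hu q⟩, (Submodule.Quotient.eq _).2 fun t ht => ?_⟩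
  rw [Submodule.subtype_apply, mul_sub, ← mul_assoc, hid t ht, sub_self]

end RightIdeals

section Regular

variable {A : Type*} {Q : Type u} [Ring A] [Ring Q] [Module A Q] [ActsByRightMul A Q]

theorem exists_left_identity_of_fg (hreg : IsVNRegular Q) {N : Submodule A Q} (hN : N.FG) :
    ∃ e ∈ N, ∀ x ∈ N, e * x = x := by
  induction N, hN using Submodule.fg_induction with
  | singleton x =>
    obtain ⟨s, hs⟩ := hreg x
    refine ⟨x * s, mul_mem (Submodule.mem_span_singleton_self x) s, fun y hy => ?_⟩
    obtain ⟨a, rfl⟩ := Submodule.mem_span_singleton.1 hy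
    rw [mul_smul_comm, hs]
  | sup N₁ N₂ _ _ h₁ h₂ =>
    obtain ⟨e₁, he₁, hid₁⟩ := h₁
    obtain ⟨e₂, he₂, hid₂⟩ := h₂
    -- `f` is a left identity of the right ideal generated by `(1 - e₁) * e₂`, and it kills `N₁`.
    obtain ⟨s, hs⟩ := hreg ((1 - e₁) * e₂)
    set f := (1 - e₁) * e₂ * s * (1 - e₁) with hf
    refine ⟨e₁ + f, ?_, fun x hx => ?_⟩
    · have : e₁ + f = e₁ * (1 - e₂ * s * (1 - e₁)) + e₂ * (s * (1 - e₁)) := by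
        rw [hf]; noncomm_ring
      rw [this]
      exact Submodule.add_mem_sup (mul_mem he₁ _) (mul_mem he₂ _)
    · obtain ⟨a, ha, b, hb, rfl⟩ := Submodule.mem_sup.1 hx
      have hfa : (e₁ + f) * a = a := by
        calc (e₁ + f) * a = e₁ * a + (1 - e₁) * e₂ * s * (a - e₁ * a) := by
              rw [hf]; noncomm_ring
          _ = a := by rw [hid₁ a ha, sub_self, mul_zero, add_zero]
      have hfe₂ : (e₁ + f) * e₂ = e₂ := by
        calc (e₁ + f) * e₂ = e₁ * e₂ + (1 - e₁) * e₂ * s * ((1 - e₁) * e₂) := by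
              rw [hf]; noncomm_ring
          _ = e₂ := by rw [hs]; noncomm_ring
      have hfb : (e₁ + f) * b = b := by rw [← hid₂ b hb, ← mul_assoc, hfe₂]
      rw [mul_add, hfa, hfb]

theorem mul_left_identity_eq (hreg : IsVNRegular Q) {N : Submodule A Q}
    (hN : N.IsFullyInvariant) {e : Q} (he : ∀ x ∈ N, e * x = x) {x : Q} (hx : x ∈ N) :
    x * e = x := by
  obtain ⟨s, hs⟩ := hreg (x - x * e)
  have hmem : s * (x - x * e) ∈ N :=
    hN (LinearMap.mulLeft A s) (sub_mem hx (mul_mem hx e))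
  refine (sub_eq_zero.1 ?_).symm
  rw [← hs, mul_assoc, sub_mul, mul_assoc x e, he _ hmem, sub_self]

theorem bijective_leftMulEnd (hreg : IsVNRegular Q) {N : Submodule A Q}
    (hN : N.IsFullyInvariant) (hfg : N.FG) :
    Function.Bijective fun x : N => leftMulEnd hN (x : Q) := by
  obtain ⟨e, he, hid⟩ := exists_left_identity_of_fg hreg hfg
  constructor
  · intro x y hxy
    have h : (x : Q) * e = y * e := congrArg Subtype.val (LinearMap.congr_fun hxy ⟨e, he⟩)
    rw [mul_left_identity_eq hreg hN hid x.2, mul_left_identity_eq hreg hN hid y.2] at h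
    exact Subtype.ext h
  · intro f
    refine ⟨f ⟨e, he⟩, LinearMap.ext fun x => Subtype.ext ?_⟩
    obtain ⟨a, ha⟩ := exists_forall_smul_eq_mul A (x : Q)
    have hx : a • (⟨e, he⟩ : N) = x := Subtype.ext ((ha e).trans (hid x x.2))
    calc (f ⟨e, he⟩ : Q) * x = (a • f ⟨e, he⟩ : N) := (ha _).symm
      _ = f x := by rw [← map_smul, hx]

theorem bijective_componentRep (hreg : IsVNRegular Q) {c : isotypicComponents A Q}
    (hfg : c.1.FG) : Function.Bijective fun x : c.1 => componentRep c (x : Q) :=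
  bijective_leftMulEnd hreg (.of_mem_isotypicComponents c.2) hfg

theorem disjoint_isotypicComponent_annihilator (hreg : IsVNRegular Q) (T : Submodule A Q) :
    Disjoint (isotypicComponent A Q T) (annihilator T) := by
  refine Submodule.disjoint_def.2 fun x hx hxT => ?_
  obtain ⟨s, hs⟩ := hreg x
  rw [← hs, mul_eq_zero_of_mem_isotypicComponent hxT (mul_mem hx s)]

theorem isotypicComponent_fg (hreg : IsVNRegular Q) (T : Submodule A Q) [IsSimpleModule A T]
    [IsArtinian A (Q ⧸ annihilator T)] : (isotypicComponent A Q T).FG := by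
  have hinj : Function.Injective ((annihilator T).mkQ.domRestrict (isotypicComponent A Q T)) := by
    rw [LinearMap.injective_domRestrict_iff, Submodule.ker_mkQ]
    exact disjoint_isotypicComponent_annihilator hreg T
  have : IsArtinian A (isotypicComponent A Q T) := isArtinian_of_injective _ hinj
  exact Module.Finite.iff_fg.1 ((IsSemisimpleModule.finite_tfae.out 0 2).2 this)

/-- If the isotypic components are finitely generated, each of them is identified through
`componentRep` with its endomorphism ring, and the socle with the direct sum of these rings. -/
noncomputable def socleEquivEnd (hreg : IsVNRegular Q)
    (hfg : ∀ c : isotypicComponents A Q, c.1.FG) :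
    moduleSocle A Q ≃+ Π₀ c : isotypicComponents A Q, Module.End A c.1 :=
  isotypicComponentsSumEquiv.symm.toAddEquiv.trans <| DFinsupp.mapRange.addEquiv fun c =>
    AddEquiv.ofBijective ((componentRep c : Q →+ Module.End A c.1).comp c.1.subtype.toAddMonoidHom)
      (bijective_componentRep hreg (hfg c))

theorem socleEquivEnd_apply (hreg : IsVNRegular Q) (hfg : ∀ c : isotypicComponents A Q, c.1.FG)
    (s : moduleSocle A Q) (c : isotypicComponents A Q) :
    socleEquivEnd hreg hfg s c = componentRep c (s : Q) := by
  conv_rhs => rw [← isotypicComponentsSumEquiv.apply_symm_apply s,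
    componentRep_isotypicComponentsSumEquiv]
  rfl

theorem mem_isotypicComponents_iff_componentRep (hreg : IsVNRegular Q)
    (hfg : ∀ c : isotypicComponents A Q, c.1.FG) (s : moduleSocle A Q)
    (c : isotypicComponents A Q) :
    (s : Q) ∈ c.1 ↔ ∀ d, d ≠ c → componentRep d (s : Q) = 0 := by
  classical
  refine ⟨fun hs d hd => componentRep_eq_zero hd.symm hs, fun hs => ?_⟩
  obtain ⟨v, rfl⟩ := isotypicComponentsSumEquiv.surjective s
  have hv : v = DFinsupp.single c (v c) := by
    ext1 d
    obtain rfl | hne := eq_or_ne d c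
    · rw [DFinsupp.single_eq_same]
    · rw [DFinsupp.single_eq_of_ne hne]
      refine (bijective_componentRep hreg (hfg d)).injective ?_
      simp only [ZeroMemClass.coe_zero, map_zero, ← hs d hne,
        componentRep_isotypicComponentsSumEquiv]
  rw [hv, isotypicComponentsSumEquiv_single]
  exact (v c).2

theorem exists_socle_addEquiv_matrix (hreg : IsVNRegular Q)
    (hfg : ∀ c : isotypicComponents A Q, c.1.FG) :
    ∃ (n : isotypicComponents A Q → ℕ) (K : isotypicComponents A Q → Type u)
      (_ : ∀ c, DivisionRing (K c))
      (φ : moduleSocle A Q ≃+ Π₀ c, Matrix (Fin (n c)) (Fin (n c)) (K c)),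
      (∀ c, 0 < n c) ∧
      (∀ x y z : moduleSocle A Q, (z : Q) = x * y → ∀ c, φ z c = φ x c * φ y c) ∧
      ∀ (s : moduleSocle A Q) c, (s : Q) ∈ c.1 ↔ ∀ d, d ≠ c → φ s d = 0 := by
  have hfin (c : isotypicComponents A Q) : Module.Finite A c.1 := Module.Finite.iff_fg.2 (hfg c)
  choose n K inst hn ψ using fun c : isotypicComponents A Q =>
    exists_divisionRing_ringEquiv_matrix_end (IsIsotypic.isotypicComponents c.2)
  let φ := (socleEquivEnd hreg hfg).trans
    (DFinsupp.mapRange.addEquiv fun c => (ψ c).some.toAddEquiv)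
  have hφ (s : moduleSocle A Q) (c) : φ s c = (ψ c).some (componentRep c (s : Q)) := by
    rw [← socleEquivEnd_apply hreg hfg]
    rfl
  refine ⟨n, K, inst, φ, hn, fun x y z hz c => ?_, fun s c => ?_⟩
  · rw [hφ, hφ, hφ, hz, map_mul, map_mul]
  · rw [mem_isotypicComponents_iff_componentRep hreg hfg]
    simp only [hφ, map_eq_zero_iff _ (ψ _).some.injective]

end Regular

end ActsByRightMul

section QuotientRing

variable {R : Type u} [Ring R]

/-- A right ideal of `R` that is also a left ideal. `Ideal.IsTwoSided` is about left ideals, whereas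
the socle sequence consists of submodules of the right module `R`. -/
class IsLeftStable (S : Submodule Rᵐᵒᵖ R) : Prop where
  mul_mem (r : R) {x : R} : x ∈ S → r * x ∈ S

namespace IsLeftStable

variable (S : Submodule Rᵐᵒᵖ R) [IsLeftStable S]

/-- The ring congruence of a two-sided ideal, given as a right ideal. -/
def ringCon : RingCon R where
  __ := QuotientAddGroup.con S.toAddSubgroup
  mul' {a b c d} hab hcd := by
    rw [QuotientAddGroup.con, QuotientAddGroup.leftRel_apply] at *
    have h : -(a * c) + b * d = (-a + b) * c + b * (-c + d) := by noncomm_ring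
    rw [h]
    exact add_mem (S.smul_mem (.op c) hab) (mul_mem b hcd)

instance : Ring (R ⧸ S) :=
  inferInstanceAs <| Ring (ringCon S).Quotient

theorem mkQ_mul (x y : R) : S.mkQ (x * y) = S.mkQ x * S.mkQ y := rfl

variable {S} in
theorem op_smul_eq_mul_mkQ (r : R) (q : R ⧸ S) : MulOpposite.op r • q = q * S.mkQ r := by
  obtain ⟨x, rfl⟩ := S.mkQ_surjective q
  rfl

instance : ActsByRightMul Rᵐᵒᵖ (R ⧸ S) where
  smul_comm a := by
    rintro ⟨x⟩ ⟨y⟩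
    exact congrArg S.mkQ (mul_assoc x y a.unop)
  exists_smul_one_eq := by
    rintro ⟨q⟩
    exact ⟨.op q, congrArg S.mkQ (one_mul q)⟩

theorem isVNRegular_quotient (h : IsVNRegular R) : IsVNRegular (R ⧸ S) := by
  rintro ⟨x⟩
  obtain ⟨y, hy⟩ := h x
  exact ⟨S.mkQ y, congrArg S.mkQ hy⟩

end IsLeftStable

end QuotientRing

section SocleSeq

variable {R : Type u} [Ring R]

theorem socleSeq_zero : socleSeq R 0 = ⊥ :=
  Ordinal.limitRecOn_zero ..

theorem socleSeq_add_one (α : Ordinal.{u}) : socleSeq R (α + 1) =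
    (moduleSocle Rᵐᵒᵖ (R ⧸ socleSeq R α)).comap (socleSeq R α).mkQ :=
  Ordinal.limitRecOn_add_one ..

theorem socleSeq_of_isSuccLimit {o : Ordinal.{u}} (ho : Order.IsSuccLimit o) :
    socleSeq R o = ⨆ (β : Ordinal.{u}) (_ : β < o), socleSeq R β :=
  Ordinal.limitRecOn_limit _ _ _ _ ho

theorem mem_socleSeq_add_one {α : Ordinal.{u}} {x : R} : x ∈ socleSeq R (α + 1) ↔
    (socleSeq R α).mkQ x ∈ moduleSocle Rᵐᵒᵖ (R ⧸ socleSeq R α) := by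
  rw [socleSeq_add_one, Submodule.mem_comap]

theorem socleSeq_mono : Monotone (socleSeq R) := by
  intro β o h
  induction o using Ordinal.limitRecOn with
  | zero => rw [nonpos_iff_eq_zero.1 h]
  | add_one α ih =>
    obtain h | rfl := h.lt_or_eq
    · refine (ih (Order.lt_add_one_iff.1 h)).trans ?_
      rw [socleSeq_add_one]
      exact le_comap_mkQ ..
    · exact le_rfl
  | limit o ho _ =>
    obtain h | rfl := h.lt_or_eq
    · rw [socleSeq_of_isSuccLimit ho]
      exact le_iSup₂_of_le β h le_rfl
    · exact le_rfl

theorem mem_socleSeq_of_isSuccLimit {o : Ordinal.{u}} (ho : Order.IsSuccLimit o) {x : R} :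
    x ∈ socleSeq R o ↔ ∃ β < o, x ∈ socleSeq R β := by
  have : Nonempty {β // β < o} := ⟨⟨0, ho.bot_lt⟩⟩
  rw [socleSeq_of_isSuccLimit ho, iSup_subtype', Submodule.mem_iSup_of_directed]
  · simp only [Subtype.exists, exists_prop]
  · exact (socleSeq_mono.comp (Subtype.mono_coe _)).directed_le

theorem socleSeq_subset_of_add_one {X : Set R} (h0 : 0 ∈ X) {o : Ordinal.{u}}
    (hsucc : ∀ α < o, (socleSeq R α : Set R) ⊆ X → (socleSeq R (α + 1) : Set R) ⊆ X) :
    (socleSeq R o : Set R) ⊆ X := by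
  induction o using Ordinal.limitRecOn with
  | zero =>
    rw [socleSeq_zero]
    exact Set.singleton_subset_iff.2 h0
  | add_one α ih =>
    exact hsucc α (Order.lt_add_one_iff.2 le_rfl)
      (ih fun γ hγ => hsucc γ (hγ.trans (Order.lt_add_one_iff.2 le_rfl)))
  | limit o ho ih =>
    intro x hx
    obtain ⟨β, hβ, hxβ⟩ := (mem_socleSeq_of_isSuccLimit ho).1 hx
    exact ih β hβ (fun γ hγ => hsucc γ (hγ.trans hβ)) hxβ

instance isLeftStable_socleSeq (o : Ordinal.{u}) : IsLeftStable (socleSeq R o) := by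
  induction o using Ordinal.limitRecOn with
  | zero =>
    rw [socleSeq_zero]
    exact ⟨fun r x hx => by rw [(Submodule.mem_bot _).1 hx, mul_zero]; exact zero_mem _⟩
  | add_one α ih =>
    refine ⟨fun r x hx => mem_socleSeq_add_one.2 ?_⟩
    rw [IsLeftStable.mkQ_mul]
    exact moduleSocle_isFullyInvariant (LinearMap.mulLeft Rᵐᵒᵖ _) (mem_socleSeq_add_one.1 hx)
  | limit o ho ih =>
    refine ⟨fun r x hx => ?_⟩
    obtain ⟨β, hβ, hxβ⟩ := (mem_socleSeq_of_isSuccLimit ho).1 hx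
    exact (mem_socleSeq_of_isSuccLimit ho).2 ⟨β, hβ, (ih β hβ).mul_mem r hxβ⟩

end SocleSeq

section DirectSumOfRings

variable {A Q ι : Type*} {B : ι → Type*} [Ring A] [Ring Q] [Module A Q] [ActsByRightMul A Q]
  [∀ i, Ring (B i)] {L : Submodule A Q} (φ : L ≃+ Π₀ i, B i)

theorem exists_mul_mul_eq_of_dfinsupp
    (hφ : ∀ x y z : L, (z : Q) = x * y → ∀ i, φ z i = φ x i * φ y i)
    (hB : ∀ i, IsVNRegular (B i)) {x : Q} (hx : x ∈ L) : ∃ y, x * y * x = x := by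
  choose s hs using hB
  let v : Π₀ i, B i :=
    (φ ⟨x, hx⟩).mapRange (fun i b => s i b * b * s i b) fun i => by rw [mul_zero, zero_mul]
  have hxv : x * φ.symm v ∈ L := ActsByRightMul.mul_mem hx _
  have hxvx : x * φ.symm v * x ∈ L := ActsByRightMul.mul_mem hxv x
  have hφv : φ ⟨_, hxvx⟩ = φ ⟨x, hx⟩ := by
    ext i
    rw [hφ ⟨_, hxv⟩ ⟨x, hx⟩ ⟨_, hxvx⟩ rfl, hφ ⟨x, hx⟩ (φ.symm v) ⟨_, hxv⟩ rfl,
      φ.apply_symm_apply, DFinsupp.mapRange_apply]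
    simp only [← mul_assoc, hs]
  exact ⟨φ.symm v, congrArg Subtype.val (φ.injective hφv)⟩

theorem exists_right_identity_of_dfinsupp
    (hφ : ∀ x y z : L, (z : Q) = x * y → ∀ i, φ z i = φ x i * φ y i) (i : ι) :
    ∃ u : L, (∀ j ≠ i, φ u j = 0) ∧
      ∀ t : L, (∀ j ≠ i, φ t j = 0) → (t : Q) * u = t := by
  classical
  let u := φ.symm (DFinsupp.single i 1)
  have hφu : φ u = DFinsupp.single i 1 := φ.apply_symm_apply _
  refine ⟨u, fun j hj => by rw [hφu, DFinsupp.single_eq_of_ne hj], fun t ht => ?_⟩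
  have htu : (t : Q) * u ∈ L := ActsByRightMul.mul_mem t.2 _
  refine congrArg Subtype.val (φ.injective (a₁ := ⟨_, htu⟩) (DFinsupp.ext fun j => ?_))
  rw [hφ t u _ rfl, hφu]
  obtain rfl | hj := eq_or_ne j i
  · rw [DFinsupp.single_eq_same, mul_one]
  · rw [ht j hj, zero_mul]

end DirectSumOfRings

section Regularity

variable {R : Type u} [Ring R]

theorem isVNRegular_of_forall_mem_moduleSocle {o : Ordinal.{u}} (ho : socleSeq R o = ⊤)
    (h : ∀ α < o, ∀ x ∈ moduleSocle Rᵐᵒᵖ (R ⧸ socleSeq R α), ∃ y, x * y * x = x) :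
    IsVNRegular R := by
  have hsub : (socleSeq R o : Set R) ⊆ {x | ∃ s, x * s * x = x} := by
    refine socleSeq_subset_of_add_one (X := {x | ∃ s, x * s * x = x})
      ⟨0, mul_zero _⟩ fun α hα ih x hx => ?_
    obtain ⟨y, hy⟩ := h α hα _ (mem_socleSeq_add_one.1 hx)
    obtain ⟨y, rfl⟩ := (socleSeq R α).mkQ_surjective y
    have hmem : x - x * y * x ∈ socleSeq R α := (Submodule.Quotient.eq _).1 hy.symm
    exact exists_mul_mul_eq_of_sub_mul_mul (ih hmem)
  exact fun x => hsub (ho ▸ Submodule.mem_top (x := x))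

end Regularity

section PrimitiveFactors

variable {R : Type u} [Ring R] {M : Type u} [AddCommGroup M] [Module Rᵐᵒᵖ M]

/-- The homomorphism `r ↦ m r` from `R` to a right module. -/
def orbitMap (m : M) : R →ₗ[Rᵐᵒᵖ] M where
  toFun r := MulOpposite.op r • m
  map_add' r s := by rw [MulOpposite.op_add, add_smul]
  map_smul' a r := by rw [RingHom.id_apply, ← mul_smul]; rfl

theorem rightAnnihilator_le_ker_orbitMap (m : M) :
    rightAnnihilator R M ≤ LinearMap.ker (orbitMap m) := fun _ hr => hr m

theorem exists_socleSeq_le_rightAnnihilator [Nontrivial M] {o : Ordinal.{u}}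
    (ho : socleSeq R o = ⊤) : ∃ α < o, socleSeq R α ≤ rightAnnihilator R M ∧
      ¬ socleSeq R (α + 1) ≤ rightAnnihilator R M := by
  by_contra! h
  have htop : (1 : R) ∈ rightAnnihilator R M :=
    socleSeq_subset_of_add_one (zero_mem _) h (ho ▸ Submodule.mem_top (x := (1 : R)))
  obtain ⟨m, hm⟩ := exists_ne (0 : M)
  exact hm ((one_smul _ m).symm.trans (htop m))

theorem exists_isSimpleModule_quotient_socleSeq_linearEquiv [IsSimpleModule Rᵐᵒᵖ M]
    {o : Ordinal.{u}} (ho : socleSeq R o = ⊤) :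
    ∃ α < o, ∃ T : Submodule Rᵐᵒᵖ (R ⧸ socleSeq R α),
      IsSimpleModule Rᵐᵒᵖ T ∧ Nonempty (T ≃ₗ[Rᵐᵒᵖ] M) := by
  have := IsSimpleModule.nontrivial Rᵐᵒᵖ M
  obtain ⟨α, hα, hle, hnle⟩ := exists_socleSeq_le_rightAnnihilator (M := M) ho
  obtain ⟨r, hr, m, hm⟩ : ∃ r ∈ socleSeq R (α + 1), ∃ m : M, MulOpposite.op r • m ≠ 0 := by
    by_contra! h
    exact hnle h
  let f := (socleSeq R α).liftQ (orbitMap m) (hle.trans (rightAnnihilator_le_ker_orbitMap m))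
  exact ⟨α, hα, exists_isSimpleModule_linearEquiv_of_not_le_ker f fun h =>
    hm (h (mem_socleSeq_add_one.1 hr))⟩

theorem rightAnnihilator_congr {N : Type u} [AddCommGroup N] [Module Rᵐᵒᵖ N]
    (e : N ≃ₗ[Rᵐᵒᵖ] M) : rightAnnihilator R N = rightAnnihilator R M := by
  ext r
  change (∀ n : N, MulOpposite.op r • n = 0) ↔ ∀ m : M, MulOpposite.op r • m = 0
  simp only [e.surjective.forall, ← map_smul, map_eq_zero_iff _ e.injective]

theorem ker_mkQ_annihilator_comp_mkQ {S : Submodule Rᵐᵒᵖ R} [IsLeftStable S]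
    (T : Submodule Rᵐᵒᵖ (R ⧸ S)) :
    LinearMap.ker ((ActsByRightMul.annihilator T).mkQ ∘ₗ S.mkQ) = rightAnnihilator R T := by
  ext r
  rw [LinearMap.mem_ker, LinearMap.comp_apply, Submodule.mkQ_apply, Submodule.Quotient.mk_eq_zero]
  simp only [ActsByRightMul.mem_annihilator, ← IsLeftStable.op_smul_eq_mul_mkQ]
  exact ⟨fun hr t => Subtype.ext (hr t t.2), fun hr t ht => congrArg Subtype.val (hr ⟨t, ht⟩)⟩

/-- The primitive factor of `R` at a simple module isomorphic to a right ideal `T` of a factor ring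
of `R`, expressed as a factor of that factor ring. -/
noncomputable def quotientRightAnnihilatorEquiv {S : Submodule Rᵐᵒᵖ R} [IsLeftStable S]
    {T : Submodule Rᵐᵒᵖ (R ⧸ S)} (e : T ≃ₗ[Rᵐᵒᵖ] M) :
    (R ⧸ rightAnnihilator R M) ≃ₗ[Rᵐᵒᵖ] (R ⧸ S) ⧸ ActsByRightMul.annihilator T :=
  (Submodule.quotEquivOfEq _ _ ((rightAnnihilator_congr e).symm.trans
    (ker_mkQ_annihilator_comp_mkQ T).symm)).trans <|
    LinearMap.quotKerEquivOfSurjective _ <|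
      (ActsByRightMul.annihilator T).mkQ_surjective.comp S.mkQ_surjective

theorem isotypicComponents_fg_of_hasPFA (hreg : IsVNRegular R) (hpfa : HasPFA R)
    (S : Submodule Rᵐᵒᵖ R) [IsLeftStable S] (c : isotypicComponents Rᵐᵒᵖ (R ⧸ S)) : c.1.FG := by
  obtain ⟨_, T, hT, rfl⟩ := c
  have : IsArtinian Rᵐᵒᵖ (R ⧸ rightAnnihilator R T) := hpfa T hT
  have := isArtinian_of_linearEquiv (quotientRightAnnihilatorEquiv (.refl Rᵐᵒᵖ T))
  exact ActsByRightMul.isotypicComponent_fg (IsLeftStable.isVNRegular_quotient S hreg) T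

end PrimitiveFactors

section Layers

variable {R : Type u} [Ring R]

theorem socleSeq_add_one_eq_top (hsa : IsRightSemiartinian R) (hreg : IsVNRegular R)
    {α : Ordinal.{u}} (hfg : (moduleSocle Rᵐᵒᵖ (R ⧸ socleSeq R α)).FG) :
    socleSeq R (α + 1) = ⊤ := by
  obtain ⟨e, he, hid⟩ := ActsByRightMul.exists_left_identity_of_fg
    (IsLeftStable.isVNRegular_quotient _ hreg) hfg
  -- Left multiplication by `1 - e` embeds `R ⧸ S_{α+1}` in `R ⧸ S_α` as a complement of the socle.
  let f := LinearMap.mulLeft Rᵐᵒᵖ (1 - e) ∘ₗ (socleSeq R α).mkQ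
  have hker : LinearMap.ker f = socleSeq R (α + 1) := by
    rw [LinearMap.ker_comp, ActsByRightMul.ker_mulLeft_one_sub he hid, socleSeq_add_one]
  have hdisj : Disjoint (moduleSocle Rᵐᵒᵖ (R ⧸ socleSeq R α)) (LinearMap.range f) :=
    (ActsByRightMul.disjoint_range_mulLeft_one_sub he hid).mono_right
      (LinearMap.range_comp_le_range _ _)
  by_contra hne
  exact hsa _ (hker ▸ hne) (moduleSocle_quotient_ker_eq_bot f hdisj)

theorem finite_isotypicComponents_quotient_socleSeq_iff (hsa : IsRightSemiartinian R)
    (hreg : IsVNRegular R) {α : Ordinal.{u}}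
    (hfg : ∀ c : isotypicComponents Rᵐᵒᵖ (R ⧸ socleSeq R α), c.1.FG) :
    Finite (isotypicComponents Rᵐᵒᵖ (R ⧸ socleSeq R α)) ↔ socleSeq R (α + 1) = ⊤ := by
  refine ⟨fun _ => socleSeq_add_one_eq_top hsa hreg
    (moduleSocle_fg_of_finite_isotypicComponents hfg), fun h => ?_⟩
  refine finite_isotypicComponents_of_moduleSocle_eq_top (eq_top_iff.2 fun q _ => ?_)
  obtain ⟨x, rfl⟩ := (socleSeq R α).mkQ_surjective q
  exact mem_socleSeq_add_one.1 (h ▸ Submodule.mem_top)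

theorem infinite_isotypicComponents_quotient_socleSeq_iff (hsa : IsRightSemiartinian R)
    (hreg : IsVNRegular R) {σ : Ordinal.{u}}
    (hσ : IsLeast {o : Ordinal.{u} | socleSeq R o = ⊤} (σ + 1)) {α : Ordinal.{u}}
    (hfg : ∀ c : isotypicComponents Rᵐᵒᵖ (R ⧸ socleSeq R α), c.1.FG) :
    Infinite (isotypicComponents Rᵐᵒᵖ (R ⧸ socleSeq R α)) ↔ α < σ := by
  have htop : socleSeq R (α + 1) = ⊤ ↔ σ ≤ α := by
    rw [← Order.lt_add_one_iff, ← Order.add_one_le_iff]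
    exact ⟨fun h => hσ.2 h, fun h => top_unique (hσ.1.symm.le.trans (socleSeq_mono h))⟩
  rw [← not_finite_iff_infinite, finite_isotypicComponents_quotient_socleSeq_iff hsa hreg hfg,
    htop, not_le]

theorem layerDecomposition_iff {σ α : Ordinal.{u}} {ι : Type u} {n : ι → ℕ} {K : ι → Type u}
    [∀ i, DivisionRing (K i)] :
    LayerDecomposition R σ α ι n K ↔
      ∃ (φ : moduleSocle Rᵐᵒᵖ (R ⧸ socleSeq R α) ≃+ Π₀ i, Matrix (Fin (n i)) (Fin (n i)) (K i))
        (c : ι ≃ isotypicComponents Rᵐᵒᵖ (R ⧸ socleSeq R α)),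
        (∀ i, 0 < n i) ∧ (Infinite ι ↔ α < σ) ∧
        (∀ x y z : moduleSocle Rᵐᵒᵖ (R ⧸ socleSeq R α), (z : R ⧸ socleSeq R α) = x * y →
          ∀ i, φ z i = φ x i * φ y i) ∧
        (∀ (s : moduleSocle Rᵐᵒᵖ (R ⧸ socleSeq R α)) i,
          (s : R ⧸ socleSeq R α) ∈ (c i).1 ↔ ∀ j, j ≠ i → φ s j = 0) ∧
        ∀ i, (c i).1.FG := by
  constructor
  · rintro ⟨φ, hn, hinf, hmul, H, hH, hcomp, hfg, hinj, hsurj⟩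
    let c : ι → isotypicComponents Rᵐᵒᵖ (R ⧸ socleSeq R α) := fun i => ⟨H i, hcomp i⟩
    have hc : Function.Bijective c :=
      ⟨fun i j hij => hinj (congrArg Subtype.val hij),
        fun d => (hsurj d d.2).imp fun i hi => Subtype.ext hi.symm⟩
    refine ⟨φ, .ofBijective c hc, hn, hinf, fun x y z hz => ?_, fun s i => ?_, hfg⟩
    · obtain ⟨x', hx'⟩ := (socleSeq R α).mkQ_surjective x
      obtain ⟨y', hy'⟩ := (socleSeq R α).mkQ_surjective y
      exact hmul x y z x' y' hx' hy' (by rw [IsLeftStable.mkQ_mul, hx', hy', hz])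
    · change (s : R ⧸ socleSeq R α) ∈ (H i : Set _) ↔ _
      rw [hH, Subtype.val_injective.mem_set_image]
      rfl
  · rintro ⟨φ, c, hn, hinf, hmul, hmem, hfg⟩
    refine ⟨φ, hn, hinf, fun x y z x' y' hx hy hz => hmul x y z ?_, fun i => (c i).1,
      fun i => ?_, fun i => (c i).2, hfg, Subtype.val_injective.comp c.injective,
      fun H' hH' => ⟨c.symm ⟨H', hH'⟩, congrArg Subtype.val (c.apply_symm_apply ⟨H', hH'⟩).symm⟩⟩
    · rw [← hx, ← hy, ← hz, IsLeftStable.mkQ_mul]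
    · ext q
      refine ⟨fun hq => ?_, ?_⟩
      · have hsoc : q ∈ moduleSocle Rᵐᵒᵖ (R ⧸ socleSeq R α) :=
          moduleSocle_eq_iSup_isotypicComponents.ge (Submodule.mem_iSup_of_mem (c i) hq)
        exact ⟨⟨q, hsoc⟩, (hmem ⟨q, hsoc⟩ i).1 hq, rfl⟩
      · rintro ⟨s, hs, rfl⟩
        exact (hmem s i).2 hs

theorem exists_layerDecomposition (hsa : IsRightSemiartinian R) {σ : Ordinal.{u}}
    (hσ : IsLeast {o : Ordinal.{u} | socleSeq R o = ⊤} (σ + 1)) (hreg : IsVNRegular R)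
    (hpfa : HasPFA R) (α : Ordinal.{u}) :
    ∃ (ι : Type u) (n : ι → ℕ) (K : ι → Type u) (_ : ∀ i, DivisionRing (K i)),
      LayerDecomposition R σ α ι n K := by
  have hfg := isotypicComponents_fg_of_hasPFA hreg hpfa (socleSeq R α)
  obtain ⟨n, K, inst, φ, hn, hmul, hmem⟩ := ActsByRightMul.exists_socle_addEquiv_matrix
    (IsLeftStable.isVNRegular_quotient (socleSeq R α) hreg) hfg
  exact ⟨_, n, K, inst, layerDecomposition_iff.2 ⟨φ, .refl _, hn,
    infinite_isotypicComponents_quotient_socleSeq_iff hsa hreg hσ hfg, hmul, hmem, hfg⟩⟩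

namespace LayerDecomposition

variable {σ α : Ordinal.{u}} {ι : Type u} {n : ι → ℕ} {K : ι → Type u} [∀ i, DivisionRing (K i)]

theorem exists_mul_mul_eq (h : LayerDecomposition R σ α ι n K) {x : R ⧸ socleSeq R α}
    (hx : x ∈ moduleSocle Rᵐᵒᵖ (R ⧸ socleSeq R α)) : ∃ y, x * y * x = x := by
  obtain ⟨φ, -, -, -, hmul, -⟩ := layerDecomposition_iff.1 h
  exact exists_mul_mul_eq_of_dfinsupp φ hmul (fun i => isVNRegular_of_isSemisimpleRing _) hx

theorem isArtinian_quotient_annihilator (h : LayerDecomposition R σ α ι n K)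
    (T : Submodule Rᵐᵒᵖ (R ⧸ socleSeq R α)) [hT : IsSimpleModule Rᵐᵒᵖ T] :
    IsArtinian Rᵐᵒᵖ ((R ⧸ socleSeq R α) ⧸ ActsByRightMul.annihilator T) := by
  obtain ⟨φ, c, -, -, hmul, hmem, hfg⟩ := layerDecomposition_iff.1 h
  obtain ⟨i, hi⟩ := c.surjective ⟨isotypicComponent Rᵐᵒᵖ _ T, T, hT, rfl⟩
  have hci : (c i).1 = isotypicComponent Rᵐᵒᵖ _ T := congrArg Subtype.val hi
  obtain ⟨u, hu, hid⟩ := exists_right_identity_of_dfinsupp φ hmul i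
  refine ActsByRightMul.isArtinian_quotient_annihilator (hci ▸ hfg i) (hci ▸ (hmem u i).2 hu)
    fun t ht => ?_
  have htsoc : t ∈ moduleSocle Rᵐᵒᵖ (R ⧸ socleSeq R α) :=
    (le_sSup hT : T ≤ _) ht
  exact hid ⟨t, htsoc⟩ ((hmem ⟨t, htsoc⟩ i).1 (hci ▸ T.le_isotypicComponent ht))

end LayerDecomposition

end Layers

/-- Theorem 7 of the paper, after Ružička–Trlifaj–Žemlička: a right
semiartinian ring is von Neumann regular with primitive factors artinian iff each layer
of its socle sequence decomposes as a direct sum of full matrix rings over skew-fields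
as described in `LayerDecomposition`. -/
theorem vnRegular_pfa_iff_layerDecomposition (R : Type u) [Ring R]
    (hsa : IsRightSemiartinian R)
    (σ : Ordinal.{u}) (hσ : IsLeast {o : Ordinal.{u} | socleSeq R o = ⊤} (σ + 1)) :
    (IsVNRegular R ∧ HasPFA R) ↔
      ∀ α : Ordinal.{u}, α ≤ σ →
        ∃ (ι : Type u) (n : ι → ℕ) (K : ι → Type u) (inst : ∀ β, DivisionRing (K β)),
          @LayerDecomposition R _ σ α ι n K inst := by
  refine ⟨fun ⟨hreg, hpfa⟩ α _ => exists_layerDecomposition hsa hσ hreg hpfa α, fun h => ⟨?_, ?_⟩⟩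
  · refine isVNRegular_of_forall_mem_moduleSocle hσ.1 fun α hα x hx => ?_
    obtain ⟨ι, n, K, inst, hdec⟩ := h α (Order.lt_add_one_iff.1 hα)
    exact hdec.exists_mul_mul_eq hx
  · intro M _ _ _
    obtain ⟨α, hα, T, hT, ⟨e⟩⟩ :=
      exists_isSimpleModule_quotient_socleSeq_linearEquiv (M := M) hσ.1
    obtain ⟨ι, n, K, inst, hdec⟩ := h α (Order.lt_add_one_iff.1 hα)
    exact (quotientRightAnnihilatorEquiv e).isArtinian_iff.2
      (hdec.isArtinian_quotient_annihilator T)
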